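/- Let f, g : ℕ → ℂ with f(1) ≠ 0, μ_f the convolution inverse of f, Λ_{fg} = μ_f ⋆ g. Let η : ℕ → ℂ be any function with η(b) = 1 for all b ≤ V₁. Then the weighted Vaughan identity Λ_{fg} = (Λ_{fg})_{≤U₁} − (Λ_{fg})_{≤U₁} ⋆ (μ_f · η) ⋆ f + (μ_f · η) ⋆ g + (Λ_{fg})_{>U₁} ⋆ (μ_f · (1−η)) ⋆ f holds, where μ_f · η denotes pointwise product. -/

import Mathlib

open Finset

/-- Dirichlet convolution of two arithmetic functions. -/
noncomputable def dconv (f g : ℕ → ℂ) : ℕ → ℂ := fun n => ∑ d ∈ n.divisors, f d * g (n / d)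

/-- The indicator function of `{1}`, the identity for Dirichlet convolution. -/
def ind : ℕ → ℂ := fun n => if n = 1 then 1 else 0

/-- Truncation of an arithmetic function to arguments `≤ U`. -/
noncomputable def truncLe (h : ℕ → ℂ) (U : ℝ) : ℕ → ℂ := fun n => if (n : ℝ) ≤ U then h n else 0

/-- Truncation of an arithmetic function to arguments `> V`. -/
noncomputable def truncGt (h : ℕ → ℂ) (V : ℝ) : ℕ → ℂ := fun n => if V < (n : ℝ) then h n else 0

/-- The arithmetic function attached to a function on the naturals. -/
def toA (h : ℕ → ℂ) : ArithmeticFunction ℂ := ⟨fun n => if n = 0 then 0 else h n, by simp⟩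

lemma toA_apply (h : ℕ → ℂ) {n : ℕ} (hn : 1 ≤ n) : toA h n = h n := by
  change (if n = 0 then 0 else h n) = h n
  rw [if_neg (by omega)]

lemma toA_dconv (f g : ℕ → ℂ) : toA (dconv f g) = toA f * toA g := by
  ext n
  rcases Nat.eq_zero_or_pos n with rfl | hn
  · simp
  rw [toA_apply _ hn, ArithmeticFunction.mul_apply,
    Nat.sum_divisorsAntidiagonal (fun a b => toA f a * toA g b)]
  refine Finset.sum_congr rfl fun d hd => ?_
  have hdn := Nat.dvd_of_mem_divisors hd
  rw [toA_apply _ (Nat.pos_of_mem_divisors hd),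
    toA_apply _ (Nat.div_pos (Nat.le_of_dvd hn hdn) (Nat.pos_of_mem_divisors hd))]

/-- Weighted Vaughan identity: for any weight `η` with `η(b) = 1` for `b ≤ V₁`,
`Λ_{fg} = (Λ_{fg})_{≤U₁} − (Λ_{fg})_{≤U₁} ⋆ (μf·η) ⋆ f + (μf·η) ⋆ g
  + (Λ_{fg})_{>U₁} ⋆ (μf·(1−η)) ⋆ f`. -/
theorem stmt3 (f g μf : ℕ → ℂ) (hf : f 1 ≠ 0)
    (hμ : ∀ n, dconv μf f n = ind n)
    (U₁ V₁ : ℝ) (hU₁ : 1 ≤ U₁) (hV₁ : 1 ≤ V₁)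
    (η : ℕ → ℂ) (hη : ∀ b : ℕ, (b : ℝ) ≤ V₁ → η b = 1) :
    ∀ n : ℕ, 1 ≤ n →
      dconv μf g n =
        truncLe (dconv μf g) U₁ n
          - dconv (dconv (truncLe (dconv μf g) U₁) (fun b => μf b * η b)) f n
          + dconv (fun b => μf b * η b) g n
          + dconv (dconv (truncGt (dconv μf g) U₁) (fun b => μf b * (1 - η b))) f n := by
  intro n hn
  have hone : toA μf * toA f = 1 := by
    rw [← toA_dconv]
    ext m
    rcases Nat.eq_zero_or_pos m with rfl | hm
    · simp
    rw [toA_apply _ hm, hμ, ArithmeticFunction.one_apply, ind]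
  have hsplit : toA (truncLe (dconv μf g) U₁) + toA (truncGt (dconv μf g) U₁)
      = toA μf * toA g := by
    rw [← toA_dconv]
    ext m
    rcases Nat.eq_zero_or_pos m with rfl | hm
    · simp
    rw [ArithmeticFunction.add_apply, toA_apply _ hm, toA_apply _ hm, toA_apply _ hm,
      truncLe, truncGt]
    by_cases h : (m : ℝ) ≤ U₁
    · simp [h, not_lt.mpr h]
    · simp [h, not_le.mp h]
  have hw : toA (fun b => μf b * (1 - η b)) = toA μf - toA (fun b => μf b * η b) := by
    rw [eq_sub_iff_add_eq]
    ext m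
    rcases Nat.eq_zero_or_pos m with rfl | hm
    · simp
    rw [ArithmeticFunction.add_apply, toA_apply _ hm, toA_apply _ hm, toA_apply _ hm]
    ring
  have key : toA μf * toA g + toA (truncLe (dconv μf g) U₁) * toA (fun b => μf b * η b) * toA f
      = toA (truncLe (dconv μf g) U₁) + toA (fun b => μf b * η b) * toA g
        + toA (truncGt (dconv μf g) U₁) * toA (fun b => μf b * (1 - η b)) * toA f := by
    rw [hw]
    generalize toA (truncLe (dconv μf g) U₁) = A at *
    generalize toA (truncGt (dconv μf g) U₁) = B at *
    generalize toA (fun b => μf b * η b) = W at *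
    linear_combination (W * toA f - 1) * hsplit + (W * toA g - B) * hone
  have k := congrArg (fun F : ArithmeticFunction ℂ => F n) key
  simp only [ArithmeticFunction.add_apply, ← toA_dconv, toA_apply _ hn] at k
  linear_combination k
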